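/- Let n ≥ 2, 1 < p < ∞ and 1 < 𝔭 < n. Fix pairwise distinct unit vectors ξ₁, …, ξ_m ∈ S^{n-1} that are not contained in any closed hemisphere, and positive numbers c₁, …, c_m. If ỹ ∈ [0,∞)^m satisfies ((𝔭−1)/(n−𝔭))·Σ_{i=1}^m c_i ỹ_i^p = 1 and C_𝔭(P(ỹ)) ≥ C_𝔭(P(y)) for every y ∈ [0,∞)^m with ((𝔭−1)/(n−𝔭))·Σ_{i=1}^m c_i y_i^p = 1, then the origin is an interior point of P(ỹ). -/

import Mathlib

open MeasureTheory Metric Set Filter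
open scoped RealInnerProductSpace Pointwise

/-- The electrostatic `𝔭`-capacity of a set `E ⊆ ℝⁿ`:
`C_𝔭(E) = inf { ∫ |∇u|^𝔭 : u ∈ C_c^∞(ℝⁿ), u ≥ 1 on E }`. -/
noncomputable def pCap (n : ℕ) (𝔭 : ℝ) (E : Set (EuclideanSpace ℝ (Fin n))) : ℝ :=
  sInf { c : ℝ | ∃ u : EuclideanSpace ℝ (Fin n) → ℝ,
    ContDiff ℝ (⊤ : ℕ∞) u ∧ HasCompactSupport u ∧ (∀ x ∈ E, 1 ≤ u x) ∧
    c = ∫ x, ‖fderiv ℝ u x‖ ^ 𝔭 }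

/-- The Aleksandrov body (Wulff shape) of a function, via its values on unit vectors. -/
def wulff {n : ℕ} (f : EuclideanSpace ℝ (Fin n) → ℝ) : Set (EuclideanSpace ℝ (Fin n)) :=
  { x | ∀ ξ : EuclideanSpace ℝ (Fin n), ‖ξ‖ = 1 → ⟪x, ξ⟫ ≤ f ξ }

/-- The support function `h_K(x) = sup { ⟪x, y⟫ : y ∈ K }`. -/
noncomputable def suppFn {n : ℕ} (K : Set (EuclideanSpace ℝ (Fin n)))
    (x : EuclideanSpace ℝ (Fin n)) : ℝ :=
  sSup ((fun y => ⟪x, y⟫) '' K)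

/-- Two sets are dilates if one is a positive scalar multiple of the other. -/
def AreDilates {n : ℕ} (A B : Set (EuclideanSpace ℝ (Fin n))) : Prop :=
  ∃ c : ℝ, 0 < c ∧ A = c • B

/-- A convex body: a compact convex set with nonempty interior. -/
def IsConvexBody {n : ℕ} (K : Set (EuclideanSpace ℝ (Fin n))) : Prop :=
  IsCompact K ∧ Convex ℝ K ∧ (interior K).Nonempty

/-- The `L_p` sum of two convex bodies, defined as the Wulff shape of
`(h_K^p + h_L^p)^{1/p}`. -/
noncomputable def lpSum {n : ℕ} (p : ℝ) (K L : Set (EuclideanSpace ℝ (Fin n))) :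
    Set (EuclideanSpace ℝ (Fin n)) :=
  wulff (fun ξ => (suppFn K ξ ^ p + suppFn L ξ ^ p) ^ (1 / p))

/-- The polytope `P(y) = ⋂ᵢ { x : ⟪x, ξᵢ⟫ ≤ yᵢ }`. -/
def polyP {n m : ℕ} (ξ : Fin m → EuclideanSpace ℝ (Fin n)) (y : Fin m → ℝ) :
    Set (EuclideanSpace ℝ (Fin n)) :=
  ⋂ i, { x | ⟪x, ξ i⟫ ≤ y i }

/-!
Suppose `yt j = 0` and write `P = P(yt)`. Raising the vanishing coordinates of `yt` from `0` to
`η * s` changes the constraint only by `O(s ^ p) = o(s)`, and homogeneity of the capacity restores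
the constraint, so it is enough that the capacity of the polytope grows at least linearly in `s`.

Translate by `v = η • ξ j`, so that `0 ∉ P - v`; the enlarged polytope minus `v` contains all the
dilates `τ • (P - v)` with `τ ∈ [1 - s, 1]`. Since `O(1 / s)` rescaled copies of this slab of
dilates fill a fixed slab `τ ∈ [ε, 1]`, submodularity and homogeneity show that the gain from the
thin slab is at least of order `s` times that from the fixed one, and only the strict inequality
`C (P - v) < C ([ε, 1] • (P - v))` is needed. There is a ball containing `P - v` whose boundary
sphere passes through an interior point `z` of the fixed slab; were the inequality to fail,
reflected copies of the slab, which carry `z` all over that sphere, would enlarge the ball without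
increasing its capacity. When `P - v` has too small a dimension for `z` to exist, one works in its
span.
-/

/-! ### Convex sets missing the origin -/

section ConvexCompact

variable {V : Type*} [NormedAddCommGroup V]

theorem exists_subset_ball_norm [InnerProductSpace ℝ V] [CompleteSpace V] {P : Set V}
    (hP : IsCompact P) (hPc : Convex ℝ P) (h0 : 0 ∉ P) : ∃ x, P ⊆ ball x ‖x‖ := by
  obtain ⟨f, u, hu0, hu⟩ := geometric_hahn_banach_point_closed hPc hP.isClosed h0
  rw [map_zero] at hu0
  obtain ⟨M, hM0, hM⟩ := hP.isBounded.exists_pos_norm_le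
  set a := (InnerProductSpace.toDual ℝ V).symm f
  refine ⟨(M ^ 2 / u) • a, fun p hp => ?_⟩
  have hinner : u < ⟪a, p⟫ := by simpa only [a, InnerProductSpace.toDual_symm_apply] using hu p hp
  rw [mem_ball_iff_norm', ← sq_lt_sq₀ (norm_nonneg _) (norm_nonneg _), norm_sub_sq_real,
    real_inner_smul_left]
  have hlower : M ^ 2 < M ^ 2 / u * ⟪a, p⟫ := by
    rw [div_mul_eq_mul_div, lt_div_iff₀ hu0]
    gcongr
  have hupper : ‖p‖ ^ 2 ≤ M ^ 2 := pow_le_pow_left₀ (norm_nonneg p) (hM p hp) 2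
  linarith [sq_nonneg M]

theorem exists_mem_interior_convexHull_subset_ball [InnerProductSpace ℝ V]
    [FiniteDimensional ℝ V] {P : Set V} (hP : IsCompact P) (hPc : Convex ℝ P) (hne : P.Nonempty)
    (h0 : 0 ∉ P) (hint : (interior (convexHull ℝ (insert 0 P))).Nonempty) :
    ∃ x, ∃ z ∈ interior (convexHull ℝ (insert 0 P)), z ≠ 0 ∧ P ⊆ ball x (dist z x) := by
  obtain ⟨x, hx⟩ := exists_subset_ball_norm hP hPc h0
  obtain ⟨R, hR, hPR⟩ := exists_lt_subset_ball hP.isClosed hx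
  have : Nontrivial V := hne.elim fun p hp => ⟨p, 0, ne_of_mem_of_not_mem hp h0⟩
  have : (nhdsWithin (0 : V) {0}ᶜ).NeBot := Module.punctured_nhds_neBot ℝ V 0
  have hfar : IsOpen {z | R < dist z x} := isOpen_lt continuous_const (by fun_prop)
  have h0cl : (0 : V) ∈ closure (interior (convexHull ℝ (insert 0 P))) := by
    rw [(convex_convexHull ℝ _).closure_interior_eq_closure_of_nonempty_interior hint]
    exact subset_closure (subset_convexHull ℝ _ (mem_insert 0 P))
  have hmeet : ({z | R < dist z x} ∩ interior (convexHull ℝ (insert 0 P))).Nonempty :=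
    mem_closure_iff.1 h0cl _ hfar (by simpa using hR)
  obtain ⟨z, ⟨hzR, hz⟩, hz0⟩ :=
    (dense_compl_singleton (0 : V)).inter_open_nonempty _ (hfar.inter isOpen_interior) hmeet
  exact ⟨x, z, hz, hz0, hPR.trans (ball_subset_ball (le_of_lt hzR))⟩

variable [NormedSpace ℝ V]

theorem convexHull_insert_zero {P : Set V} (hPc : Convex ℝ P) (hne : P.Nonempty) :
    convexHull ℝ (insert 0 P) = Icc (0 : ℝ) 1 • P := by
  ext x
  rw [convexHull_insert hne, hPc.convexHull_eq, convexJoin_singleton_left, Set.mem_smul]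
  simp only [segment_eq_image, smul_zero, zero_add, mem_iUnion, mem_image]
  grind

theorem exists_mem_interior_Icc_smul {P : Set V} (hP : Bornology.IsBounded P)
    (hPc : Convex ℝ P) (hne : P.Nonempty) {z : V} (hz : z ∈ interior (convexHull ℝ (insert 0 P)))
    (hz0 : z ≠ 0) : ∃ ε ∈ Ioo (0 : ℝ) 1, z ∈ interior (Icc ε 1 • P) := by
  rw [convexHull_insert_zero hPc hne] at hz
  obtain ⟨M, hM0, hM⟩ := hP.exists_pos_norm_le
  have hz_pos : 0 < ‖z‖ := norm_pos_iff.2 hz0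
  set ε := min (‖z‖ / 2 / M) (1 / 2)
  have hopen : IsOpen {x : V | ‖z‖ / 2 < ‖x‖} := isOpen_lt continuous_const continuous_norm
  refine ⟨ε, ⟨by positivity, (min_le_right _ _).trans_lt one_half_lt_one⟩, mem_interior.2
    ⟨interior (Icc (0 : ℝ) 1 • P) ∩ {x | ‖z‖ / 2 < ‖x‖}, ?_, isOpen_interior.inter hopen, hz,
      half_lt_self hz_pos⟩⟩
  rintro x ⟨hx, hzx⟩
  obtain ⟨τ, ⟨hτ0, hτ1⟩, p, hp, rfl⟩ := interior_subset hx
  refine ⟨τ, ⟨(min_le_left _ _).trans ((div_le_iff₀ hM0).2 ?_), hτ1⟩, p, hp, rfl⟩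
  calc ‖z‖ / 2 ≤ ‖τ • p‖ := le_of_lt hzx
    _ = τ * ‖p‖ := by rw [norm_smul, Real.norm_of_nonneg hτ0]
    _ ≤ τ * M := by gcongr; exact hM p hp

end ConvexCompact

/-! ### Homogeneous submodular set functions -/

theorem exists_one_sub_pow_le {ε : ℝ} (hε : 0 < ε) :
    ∃ B > 0, ∀ t ∈ Ioo (0 : ℝ) 1, ∃ N : ℕ, 0 < N ∧ N * t ≤ B ∧ (1 - t) ^ N ≤ ε := by
  set b := |Real.log ε| + 1
  refine ⟨b + 1, by positivity, fun t ⟨ht0, ht1⟩ =>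
    ⟨⌈b / t⌉₊, Nat.ceil_pos.2 (by positivity), ?_, ?_⟩⟩
  · have hceil : (⌈b / t⌉₊ : ℝ) < b / t + 1 := Nat.ceil_lt_add_one (by positivity)
    calc ⌈b / t⌉₊ * t ≤ (b / t + 1) * t := by gcongr
      _ = b + t := by field_simp
      _ ≤ b + 1 := by gcongr
  · have hbt : b ≤ t * ⌈b / t⌉₊ := (div_le_iff₀' ht0).1 (Nat.le_ceil _)
    calc (1 - t) ^ ⌈b / t⌉₊ ≤ Real.exp (-t) ^ ⌈b / t⌉₊ :=
          pow_le_pow_left₀ (by linarith) (Real.one_sub_le_exp_neg t) _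
      _ = Real.exp (-(t * ⌈b / t⌉₊)) := by rw [← Real.exp_nat_mul]; ring_nf
      _ ≤ Real.exp (-b) := by gcongr
      _ ≤ ε := by
        rw [← Real.le_log_iff_exp_le hε]
        linarith [neg_abs_le (Real.log ε)]

/-- A set function on the bounded subsets of a normed space that is monotone, submodular, invariant
under isometries and homogeneous of degree `α`. The `𝔭`-capacity is the case `α = n - 𝔭`; nothing
is asked of the values at unbounded sets. -/
structure IsHomogeneousSubmodular {V : Type*} [NormedAddCommGroup V] [NormedSpace ℝ V]
    (C : Set V → ℝ) (α : ℝ) : Prop where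
  mono : ∀ {S T : Set V}, Bornology.IsBounded T → S ⊆ T → C S ≤ C T
  union_add_inter_le : ∀ {S T : Set V}, Bornology.IsBounded S → Bornology.IsBounded T →
    C (S ∪ T) + C (S ∩ T) ≤ C S + C T
  vadd_eq : ∀ (a : V) {S : Set V}, Bornology.IsBounded S → C (a +ᵥ S) = C S
  image_eq : ∀ (L : V ≃ₗᵢ[ℝ] V) {S : Set V}, Bornology.IsBounded S → C (L '' S) = C S
  smul_eq : ∀ {r : ℝ}, 0 < r → ∀ {S : Set V}, Bornology.IsBounded S → C (r • S) = r ^ α * C S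

namespace IsHomogeneousSubmodular

section NormedSpace

variable {V : Type*} [NormedAddCommGroup V] [NormedSpace ℝ V] {C : Set V → ℝ} {α : ℝ}

theorem union_biUnion_le (hC : IsHomogeneousSubmodular C α) {ι : Type*} {t : Finset ι}
    {G Q : ι → Set V} {X : Set V} (hX : Bornology.IsBounded X)
    (hG : ∀ i ∈ t, Bornology.IsBounded (G i)) (hQX : ∀ i ∈ t, Q i ⊆ X) (hQG : ∀ i ∈ t, Q i ⊆ G i)
    (hGQ : ∀ i ∈ t, C (G i) ≤ C (Q i)) : C (X ∪ ⋃ i ∈ t, G i) ≤ C X := by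
  classical
  induction t using Finset.induction_on with
  | empty => simp
  | insert a s _ ih =>
    rw [Finset.forall_mem_insert] at hG hQX hQG hGQ
    have hXs : Bornology.IsBounded (X ∪ ⋃ i ∈ s, G i) :=
      hX.union ((Bornology.isBounded_biUnion_finset s).2 hG.2)
    have hinter : C (Q a) ≤ C (G a ∩ (X ∪ ⋃ i ∈ s, G i)) :=
      hC.mono (hG.1.subset inter_subset_left)
        (subset_inter hQG.1 (hQX.1.trans subset_union_left))
    rw [Finset.set_biUnion_insert, union_left_comm]
    linarith [hC.union_add_inter_le hG.1 hXs, ih hG.2 hQX.2 hQG.2 hGQ.2]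

theorem closedBall_lt_closedBall (hC : IsHomogeneousSubmodular C α) (hα : 0 < α) {r s : ℝ}
    (hr : 0 < r) (hrs : r < s) (hpos : 0 < C (closedBall 0 r)) :
    C (closedBall 0 r) < C (closedBall 0 s) := by
  have hq : 1 < s / r := (one_lt_div hr).2 hrs
  have hball : closedBall (0 : V) s = (s / r) • closedBall (0 : V) r := by
    rw [smul_closedBall' (by positivity), smul_zero, Real.norm_of_nonneg (by positivity),
      div_mul_cancel₀ _ hr.ne']
  rw [hball, hC.smul_eq (by positivity) isBounded_closedBall]
  exact lt_mul_of_one_lt_left hpos (Real.one_lt_rpow hq hα)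

theorem Icc_pow_smul_le (hC : IsHomogeneousSubmodular C α) (hα : 0 ≤ α) {P : Set V}
    (hP : IsCompact P) {r : ℝ} (hr : 0 < r) (hr1 : r ≤ 1) (N : ℕ) :
    C (Icc (r ^ N) 1 • P) ≤ C P + N * (C (Icc r 1 • P) - C P) := by
  have hbdd (a b : ℝ) : Bornology.IsBounded (Icc a b • P) := (isCompact_Icc.smul_set hP).isBounded
  have hmono : C P ≤ C (Icc r 1 • P) := by
    refine hC.mono (hbdd r 1) fun x hx => ?_
    exact ⟨1, ⟨hr1, le_rfl⟩, x, hx, one_smul ℝ x⟩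
  induction N with
  | zero => simp [Set.singleton_smul]
  | succ k ih =>
    have hk : 0 < r ^ k := pow_pos hr k
    have hk1 : r ^ k ≤ 1 := pow_le_one₀ hr.le hr1
    have hunion : Icc (r ^ (k + 1)) 1 • P = r ^ k • (Icc r 1 • P) ∪ Icc (r ^ k) 1 • P := by
      rw [← smul_assoc, LinearOrderedField.smul_Icc hk, ← pow_succ, mul_one, ← Set.union_smul,
        Icc_union_Icc_eq_Icc (pow_le_pow_of_le_one hr.le hr1 k.le_succ) hk1]
    have hinter : r ^ k • P ⊆ r ^ k • (Icc r 1 • P) ∩ Icc (r ^ k) 1 • P := by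
      rintro _ ⟨x, hx, rfl⟩
      exact ⟨⟨x, ⟨1, ⟨hr1, le_rfl⟩, x, hx, one_smul ℝ x⟩, rfl⟩, r ^ k, ⟨le_rfl, hk1⟩, x, hx, rfl⟩
    have hsub := hC.union_add_inter_le ((hbdd r 1).smul₀ (r ^ k)) (hbdd (r ^ k) 1)
    have hle := hC.mono (((hbdd r 1).smul₀ (r ^ k)).subset inter_subset_left) hinter
    rw [← hunion, hC.smul_eq hk (hbdd r 1)] at hsub
    rw [hC.smul_eq hk hP.isBounded] at hle
    have hgain : (r ^ k) ^ α * (C (Icc r 1 • P) - C P) ≤ 1 * (C (Icc r 1 • P) - C P) :=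
      mul_le_mul_of_nonneg_right (Real.rpow_le_one hk.le hk1 hα) (sub_nonneg.2 hmono)
    push_cast
    linarith

theorem exists_add_mul_le_Icc_smul (hC : IsHomogeneousSubmodular C α) (hα : 0 ≤ α) {P : Set V}
    (hP : IsCompact P) {ε : ℝ} (hε : 0 < ε) (hlt : C P < C (Icc ε 1 • P)) :
    ∃ κ > 0, ∀ t ∈ Ioo (0 : ℝ) 1, C P + κ * t ≤ C (Icc (1 - t) 1 • P) := by
  obtain ⟨B, hB, hpow⟩ := exists_one_sub_pow_le hε
  refine ⟨(C (Icc ε 1 • P) - C P) / B, div_pos (sub_pos.2 hlt) hB, fun t ht => ?_⟩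
  obtain ⟨N, hN, hNt, hNε⟩ := hpow t ht
  have hN0 : (0 : ℝ) < N := Nat.cast_pos.2 hN
  have ht0 : 0 < t := ht.1
  have hslice : C (Icc ε 1 • P) - C P ≤ N * (C (Icc (1 - t) 1 • P) - C P) := by
    have hsub : C (Icc ε 1 • P) ≤ C (Icc ((1 - t) ^ N) 1 • P) :=
      hC.mono (isCompact_Icc.smul_set hP).isBounded
        (Set.smul_subset_smul_right (Icc_subset_Icc_left hNε))
    linarith [hC.Icc_pow_smul_le hα hP (sub_pos.2 ht.2) (by linarith) N]
  rw [← le_sub_iff_add_le']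
  calc (C (Icc ε 1 • P) - C P) / B * t
      ≤ (C (Icc ε 1 • P) - C P) / (N * t) * t := by gcongr
    _ = (C (Icc ε 1 • P) - C P) / N := by field_simp
    _ ≤ C (Icc (1 - t) 1 • P) - C P := (div_le_iff₀' hN0).2 hslice

end NormedSpace

section InnerProductSpace

variable {V : Type*} [NormedAddCommGroup V] [InnerProductSpace ℝ V] {C : Set V → ℝ} {α : ℝ}

-- Reflections carry `z` to any point of the sphere through `z`, so if `G` cost no more than `Q`,
-- finitely many copies of `G` would enlarge the ball through `z` at no cost.
theorem lt_of_mem_interior_of_subset_closedBall [FiniteDimensional ℝ V]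
    (hC : IsHomogeneousSubmodular C α) (hα : 0 < α) {Q G : Set V} {z : V}
    (hG : Bornology.IsBounded G) (hQG : Q ⊆ G) (hpos : 0 < C Q) (hz : z ∈ interior G)
    (hz0 : z ≠ 0) (hQz : Q ⊆ closedBall 0 ‖z‖) : C Q < C G := by
  by_contra! hGQ
  let L (x : V) : V ≃ₗᵢ[ℝ] V := (ℝ ∙ (z - x))ᗮ.reflection
  have hcover : closedBall 0 ‖z‖ ⊆ ⋃ x, ball 0 ‖z‖ ∪ interior (L x '' G) := by
    intro x hx
    refine mem_iUnion.2 ⟨x, ?_⟩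
    rcases (mem_closedBall_zero_iff.1 hx).lt_or_eq with hlt | heq
    · exact Or.inl (mem_ball_zero_iff.2 hlt)
    · right
      rw [← (L x).coe_toHomeomorph, ← (L x).toHomeomorph.image_interior]
      exact ⟨z, hz, Submodule.reflection_sub heq.symm⟩
  obtain ⟨t, ht⟩ := (isCompact_closedBall (0 : V) ‖z‖).elim_finite_subcover _
    (fun _ => isOpen_ball.union isOpen_interior) hcover
  obtain ⟨δ, hδ, hδt⟩ := (isCompact_closedBall (0 : V) ‖z‖).exists_cthickening_subset_open
    (isOpen_biUnion fun _ _ => isOpen_ball.union isOpen_interior) ht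
  rw [cthickening_closedBall hδ.le (norm_nonneg z)] at hδt
  have hL (x : V) : Bornology.IsBounded (L x '' G) := (L x).lipschitz.isBounded_image hG
  have hlarge : closedBall 0 (δ + ‖z‖) ⊆ closedBall 0 ‖z‖ ∪ ⋃ x ∈ t, L x '' G := by
    refine hδt.trans (iUnion₂_subset fun x hx => union_subset ?_ ?_)
    · exact ball_subset_closedBall.trans subset_union_left
    · exact interior_subset.trans
        ((subset_biUnion_of_mem (u := fun x => L x '' G) hx).trans subset_union_right)
  have hle : C (closedBall 0 (δ + ‖z‖)) ≤ C (closedBall 0 ‖z‖) := by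
    refine (hC.mono (isBounded_closedBall.union
      ((Bornology.isBounded_biUnion_finset t).2 fun x _ => hL x)) hlarge).trans ?_
    refine hC.union_biUnion_le (Q := fun x => L x '' Q) isBounded_closedBall (fun x _ => hL x)
      (fun x _ => ?_) (fun x _ => image_mono hQG) fun x _ => ?_
    · simpa only [(L x).image_closedBall, map_zero] using image_mono (f := L x) hQz
    · rwa [hC.image_eq _ hG, hC.image_eq _ (hG.subset hQG)]
  exact hle.not_gt (hC.closedBall_lt_closedBall hα (norm_pos_iff.2 hz0) (by linarith)
    (hpos.trans_le (hC.mono isBounded_closedBall hQz)))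

theorem exists_lt_Icc_smul_of_interior_nonempty [FiniteDimensional ℝ V]
    (hC : IsHomogeneousSubmodular C α) (hα : 0 < α) {P : Set V} (hP : IsCompact P)
    (hPc : Convex ℝ P) (hne : P.Nonempty) (h0 : 0 ∉ P)
    (hint : (interior (convexHull ℝ (insert 0 P))).Nonempty) (hpos : 0 < C P) :
    ∃ ε ∈ Ioo (0 : ℝ) 1, C P < C (Icc ε 1 • P) := by
  obtain ⟨x, z, hz, hz0, hPz⟩ :=
    exists_mem_interior_convexHull_subset_ball hP hPc hne h0 hint
  obtain ⟨ε, hε, hzε⟩ := exists_mem_interior_Icc_smul hP.isBounded hPc hne hz hz0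
  refine ⟨ε, hε, ?_⟩
  have hbdd : Bornology.IsBounded (Icc ε 1 • P) := (isCompact_Icc.smul_set hP).isBounded
  have hPG : P ⊆ Icc ε 1 • P := fun p hp => ⟨1, ⟨hε.2.le, le_rfl⟩, p, hp, one_smul ℝ p⟩
  have hnorm (y : V) : ‖-x +ᵥ y‖ = dist y x := by
    rw [vadd_eq_add, neg_add_eq_sub, dist_eq_norm]
  rw [← hC.vadd_eq (-x) hP.isBounded, ← hC.vadd_eq (-x) hbdd]
  refine hC.lt_of_mem_interior_of_subset_closedBall hα (hbdd.vadd (-x)) (vadd_set_mono hPG)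
    (z := -x +ᵥ z) ?_ ?_ ?_ ?_
  · rwa [hC.vadd_eq _ hP.isBounded]
  · rw [interior_vadd]
    exact vadd_mem_vadd_set hzε
  · rw [← norm_pos_iff, hnorm]
    exact pos_of_mem_ball (hPz hne.some_mem)
  · rintro _ ⟨p, hp, rfl⟩
    rw [mem_closedBall_zero_iff, hnorm z]
    exact (hnorm p).trans_le (le_of_lt (hPz hp))

theorem restrict [FiniteDimensional ℝ V] (hC : IsHomogeneousSubmodular C α) (W : Submodule ℝ V) :
    IsHomogeneousSubmodular (fun S : Set W => C (Subtype.val '' S)) α where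
  mono hT hST := hC.mono (Bornology.isBounded_image_subtype_val.2 hT) (image_mono hST)
  union_add_inter_le hS hT := by
    rw [image_union, image_inter Subtype.val_injective]
    exact hC.union_add_inter_le (Bornology.isBounded_image_subtype_val.2 hS)
      (Bornology.isBounded_image_subtype_val.2 hT)
  vadd_eq a S hS := by
    rw [← hC.vadd_eq (a : V) (Bornology.isBounded_image_subtype_val.2 hS)]
    exact congrArg C (image_vadd_distrib W.subtype a S)
  image_eq L S hS := by
    let L' : V ≃ₗᵢ[ℝ] V :=
      (W.subtypeₗᵢ.comp L.toLinearIsometry).extend.toLinearIsometryEquiv rfl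
    have hL' (w : W) : L' w = L w := LinearIsometry.extend_apply _ w
    rw [← hC.image_eq L' (Bornology.isBounded_image_subtype_val.2 hS), image_image, image_image]
    simp only [hL']
  smul_eq hr S hS := by
    rw [← hC.smul_eq hr (Bornology.isBounded_image_subtype_val.2 hS)]
    exact congrArg C (image_smul_set W.subtype _ S)

theorem exists_lt_Icc_smul [FiniteDimensional ℝ V] (hC : IsHomogeneousSubmodular C α)
    (hα : 0 < α) {P : Set V} (hP : IsCompact P) (hPc : Convex ℝ P) (hne : P.Nonempty)
    (h0 : 0 ∉ P) (hpos : 0 < C P) : ∃ ε ∈ Ioo (0 : ℝ) 1, C P < C (Icc ε 1 • P) := by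
  let W := Submodule.span ℝ P
  let P' : Set W := Subtype.val ⁻¹' P
  have himage : Subtype.val '' P' = P :=
    (Subtype.image_preimage_coe _ _).trans (inter_eq_right.2 Submodule.subset_span)
  have hsmul (ε : ℝ) : Subtype.val '' (Icc ε 1 • P') = Icc ε 1 • P := by
    rw [← himage]
    exact image_image2_distrib_right fun _ _ => rfl
  have hint : (interior (convexHull ℝ (insert 0 P'))).Nonempty := by
    rw [interior_convexHull_nonempty_iff_affineSpan_eq_top, ← AffineSubspace.coe_eq_univ_iff,
      affineSpan_insert_zero, Submodule.span_span_coe_preimage, Submodule.top_coe]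
  have hlt := (hC.restrict W).exists_lt_Icc_smul_of_interior_nonempty hα (P := P')
    (W.closed_of_finiteDimensional.isClosedEmbedding_subtypeVal.isCompact_preimage hP)
    (hPc.linear_preimage W.subtype) (image_nonempty.1 (himage ▸ hne)) h0 hint
  simpa only [hsmul, himage, hpos, forall_const] using hlt

end InnerProductSpace

/-! ### Polytopes -/

end IsHomogeneousSubmodular

section Polytopes

variable {n m : ℕ} {ξ : Fin m → EuclideanSpace ℝ (Fin n)} {y y' : Fin m → ℝ}

theorem mem_polyP {x : EuclideanSpace ℝ (Fin n)} : x ∈ polyP ξ y ↔ ∀ i, ⟪x, ξ i⟫ ≤ y i :=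
  mem_iInter

theorem isClosed_polyP (ξ : Fin m → EuclideanSpace ℝ (Fin n)) (y : Fin m → ℝ) :
    IsClosed (polyP ξ y) :=
  isClosed_iInter fun _ => isClosed_le (by fun_prop) continuous_const

theorem convex_polyP (ξ : Fin m → EuclideanSpace ℝ (Fin n)) (y : Fin m → ℝ) :
    Convex ℝ (polyP ξ y) :=
  convex_iInter fun i => convex_halfSpace_le ((innerₗ _).flip (ξ i)).isLinear (y i)

theorem exists_pos_mul_norm_le_sum_max_inner
    (hhemi : ¬ ∃ v : EuclideanSpace ℝ (Fin n), ‖v‖ = 1 ∧ ∀ i, ⟪ξ i, v⟫ ≤ 0) :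
    ∃ δ > 0, ∀ x : EuclideanSpace ℝ (Fin n), δ * ‖x‖ ≤ ∑ i, max 0 ⟪x, ξ i⟫ := by
  have hpos : ∀ v ∈ sphere (0 : EuclideanSpace ℝ (Fin n)) 1, 0 < ∑ i, max 0 ⟪v, ξ i⟫ := by
    intro v hv
    by_contra! hle
    refine hhemi ⟨v, mem_sphere_zero_iff_norm.1 hv, fun i => ?_⟩
    calc ⟪ξ i, v⟫ = ⟪v, ξ i⟫ := real_inner_comm _ _
      _ ≤ max 0 ⟪v, ξ i⟫ := le_max_right _ _
      _ ≤ ∑ i, max 0 ⟪v, ξ i⟫ :=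
        Finset.single_le_sum (f := fun i => max 0 ⟪v, ξ i⟫) (fun _ _ => le_max_left _ _)
          (Finset.mem_univ i)
      _ ≤ 0 := hle
  obtain ⟨δ, hδ0, hδ⟩ := (isCompact_sphere _ _).exists_forall_le'
    (Continuous.continuousOn (by fun_prop)) hpos
  refine ⟨δ, hδ0, fun x => ?_⟩
  rcases eq_or_ne x 0 with rfl | hx
  · simp
  · have hx0 : 0 < ‖x‖ := norm_pos_iff.2 hx
    have hunit := hδ (‖x‖⁻¹ • x) (by simp [norm_smul, hx])
    calc δ * ‖x‖ ≤ (∑ i, max 0 ⟪‖x‖⁻¹ • x, ξ i⟫) * ‖x‖ := by gcongr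
      _ = ∑ i, max 0 ⟪x, ξ i⟫ := by
        simp only [Finset.sum_mul, max_mul_of_nonneg _ _ hx0.le, zero_mul, real_inner_smul_left,
          inv_mul_eq_div, div_mul_cancel₀ _ hx0.ne']

theorem isCompact_polyP
    (hhemi : ¬ ∃ v : EuclideanSpace ℝ (Fin n), ‖v‖ = 1 ∧ ∀ i, ⟪ξ i, v⟫ ≤ 0) (y : Fin m → ℝ) :
    IsCompact (polyP ξ y) := by
  obtain ⟨δ, hδ0, hδ⟩ := exists_pos_mul_norm_le_sum_max_inner hhemi
  refine (isCompact_closedBall 0 ((∑ i, max 0 (y i)) / δ)).of_isClosed_subset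
    (isClosed_polyP ξ y) fun x hx => ?_
  rw [mem_closedBall_zero_iff, le_div_iff₀' hδ0]
  refine (hδ x).trans ?_
  gcongr with i
  exact mem_polyP.1 hx i

theorem smul_polyP (ξ : Fin m → EuclideanSpace ℝ (Fin n)) (y : Fin m → ℝ) {r : ℝ} (hr : 0 < r) :
    r • polyP ξ y = polyP ξ (r • y) := by
  ext x
  simp only [mem_smul_set_iff_inv_smul_mem₀ hr.ne', mem_polyP, real_inner_smul_left,
    inv_mul_le_iff₀ hr, Pi.smul_apply, smul_eq_mul]

theorem vadd_polyP (ξ : Fin m → EuclideanSpace ℝ (Fin n)) (y : Fin m → ℝ)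
    (a : EuclideanSpace ℝ (Fin n)) : a +ᵥ polyP ξ y = polyP ξ (fun i => ⟪a, ξ i⟫ + y i) := by
  ext x
  simp only [mem_vadd_set_iff_neg_vadd_mem, mem_polyP, vadd_eq_add, inner_add_left, inner_neg_left,
    neg_add_le_iff_le_add]

theorem Icc_smul_polyP_subset {r : ℝ} (hr : 0 ≤ r) (h : ∀ τ ∈ Icc r 1, ∀ i, τ * y i ≤ y' i) :
    Icc r 1 • polyP ξ y ⊆ polyP ξ y' := by
  rintro _ ⟨τ, hτ, x, hx, rfl⟩
  refine mem_polyP.2 fun i => ?_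
  rw [real_inner_smul_left]
  exact (mul_le_mul_of_nonneg_left (mem_polyP.1 hx i) (hr.trans hτ.1)).trans (h τ hτ i)

theorem Icc_smul_neg_vadd_polyP_subset {v : EuclideanSpace ℝ (Fin n)} {η s : ℝ}
    (hv : ∀ i, ⟪v, ξ i⟫ ≤ η) (hη : 0 ≤ η) (hηy : ∀ i, y i ≠ 0 → η ≤ y i) (hs : s ≤ 1) :
    Icc (1 - s) 1 • (-v +ᵥ polyP ξ y) ⊆
      -v +ᵥ polyP ξ fun i => if y i = 0 then η * s else y i := by
  rw [vadd_polyP, vadd_polyP]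
  refine Icc_smul_polyP_subset (sub_nonneg.2 hs) fun τ hτ i => ?_
  have hτ0 : 0 ≤ 1 - τ := sub_nonneg.2 hτ.2
  have hτs : (1 - τ) * η ≤ η * s := by
    rw [mul_comm]
    gcongr
    linarith [hτ.1]
  have hvτ : (1 - τ) * ⟪v, ξ i⟫ ≤ (1 - τ) * η := mul_le_mul_of_nonneg_left (hv i) hτ0
  rw [inner_neg_left]
  split_ifs with hi
  · rw [hi]
    linarith
  · linarith [mul_le_mul_of_nonneg_left (hηy i hi) hτ0]

theorem closedBall_subset_polyP (hξ : ∀ i, ‖ξ i‖ = 1) {r : ℝ} (hr : ∀ i, r ≤ y i) :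
    closedBall 0 r ⊆ polyP ξ y := by
  refine fun x hx => mem_polyP.2 fun i => ?_
  calc ⟪x, ξ i⟫ ≤ ‖x‖ * ‖ξ i‖ := real_inner_le_norm _ _
    _ = ‖x‖ := by rw [hξ, mul_one]
    _ ≤ y i := (mem_closedBall_zero_iff.1 hx).trans (hr i)

theorem zero_mem_interior_polyP (hy : ∀ i, 0 < y i) :
    (0 : EuclideanSpace ℝ (Fin n)) ∈ interior (polyP ξ y) := by
  rw [polyP, interior_iInter_of_finite, mem_iInter]
  intro i
  have hsub : {x : EuclideanSpace ℝ (Fin n) | ⟪x, ξ i⟫ < y i} ⊆ {x | ⟪x, ξ i⟫ ≤ y i} :=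
    ofPred_subset_ofPred.2 fun _ => le_of_lt
  exact interior_maximal hsub (isOpen_lt (by fun_prop) continuous_const) (by simpa using hy i)

end Polytopes

theorem exists_pos_forall_le_of_ne_zero {ι : Type*} [Finite ι] {y : ι → ℝ} (hy : ∀ i, 0 ≤ y i) :
    ∃ η > 0, ∀ i, y i ≠ 0 → η ≤ y i := by
  have hev : ∀ᶠ η in nhdsWithin (0 : ℝ) (Ioi 0), ∀ i, y i ≠ 0 → η ≤ y i :=
    eventually_all.2 fun i => eventually_imp_distrib_left.2 fun hi =>
      nhdsWithin_le_nhds (Iic_mem_nhds ((hy i).lt_of_ne' hi))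
  obtain ⟨η, hηy, hη⟩ := (hev.and self_mem_nhdsWithin).exists
  exact ⟨η, hη, hηy⟩

theorem exists_one_add_mul_rpow_rpow_mul_lt {p κ : ℝ} (hp : 1 < p) (hκ : 0 < κ) (A D β : ℝ) :
    ∃ s ∈ Ioo (0 : ℝ) 1, (1 + D * s ^ p) ^ β * A < A + κ * s := by
  have hp0 : p ≠ 0 := (one_pos.trans hp).ne'
  have hderiv : HasDerivAt (fun s : ℝ => (1 + D * s ^ p) ^ β * A) 0 0 := by
    have hinner := (((Real.hasDerivAt_rpow_const (x := 0) (Or.inr hp.le)).const_mul D).const_add 1)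
    have := (hinner.rpow_const (p := β) (Or.inl (by simp [Real.zero_rpow hp0]))).mul_const A
    simpa [Real.zero_rpow (sub_pos.2 hp).ne'] using this
  obtain ⟨s, hslope, hs⟩ := ((hderiv.tendsto_slope_zero_right.eventually_lt_const hκ).and
    (Ioo_mem_nhdsGT one_pos)).exists
  refine ⟨s, hs, ?_⟩
  simp only [zero_add, Real.zero_rpow hp0, mul_zero, add_zero, Real.one_rpow, one_mul,
    smul_eq_mul, inv_mul_lt_iff₀ hs.1] at hslope
  linarith

namespace IsHomogeneousSubmodular

section Polytopes

variable {n m : ℕ} {C : Set (EuclideanSpace ℝ (Fin n)) → ℝ} {α : ℝ}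
  {ξ : Fin m → EuclideanSpace ℝ (Fin n)}

theorem polyP_le_rpow_mul (hC : IsHomogeneousSubmodular C α) {p : ℝ} (hp : 0 < p)
    (hhemi : ¬ ∃ v : EuclideanSpace ℝ (Fin n), ‖v‖ = 1 ∧ ∀ i, ⟪ξ i, v⟫ ≤ 0) {w : Fin m → ℝ} {M : ℝ}
    (hM : ∀ y : Fin m → ℝ, (∀ i, 0 ≤ y i) → ∑ i, w i * y i ^ p = 1 → C (polyP ξ y) ≤ M)
    {y : Fin m → ℝ} (hy : ∀ i, 0 ≤ y i) (hsum : 0 < ∑ i, w i * y i ^ p) :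
    C (polyP ξ y) ≤ (∑ i, w i * y i ^ p) ^ (α / p) * M := by
  set S := ∑ i, w i * y i ^ p
  set r := S ^ p⁻¹
  have hr : 0 < r := Real.rpow_pos_of_pos hsum _
  have hrp : r⁻¹ ^ p = S⁻¹ := by
    rw [Real.inv_rpow hr.le, Real.rpow_inv_rpow hsum.le hp.ne']
  have hrα : r ^ α = S ^ (α / p) := by rw [← Real.rpow_mul hsum.le, inv_mul_eq_div]
  have hunit : ∑ i, w i * (r⁻¹ • y) i ^ p = 1 := by
    calc ∑ i, w i * (r⁻¹ • y) i ^ p = ∑ i, S⁻¹ * (w i * y i ^ p) := by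
          refine Finset.sum_congr rfl fun i _ => ?_
          rw [Pi.smul_apply, smul_eq_mul, Real.mul_rpow (by positivity) (hy i), hrp]
          ring
      _ = 1 := by rw [← Finset.mul_sum, inv_mul_cancel₀ hsum.ne']
  calc C (polyP ξ y) = C (r • polyP ξ (r⁻¹ • y)) := by
        rw [smul_polyP ξ _ hr, smul_inv_smul₀ hr.ne']
    _ = S ^ (α / p) * C (polyP ξ (r⁻¹ • y)) := by
        rw [hC.smul_eq hr (isCompact_polyP hhemi _).isBounded, hrα]
    _ ≤ S ^ (α / p) * M := by
        gcongr
        exact hM _ (fun i => mul_nonneg (inv_nonneg.2 hr.le) (hy i)) hunit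

theorem exists_polyP_add_mul_le (hC : IsHomogeneousSubmodular C α) (hα : 0 < α)
    (hξ : ∀ i, ‖ξ i‖ = 1)
    (hhemi : ¬ ∃ v : EuclideanSpace ℝ (Fin n), ‖v‖ = 1 ∧ ∀ i, ⟪ξ i, v⟫ ≤ 0)
    {y : Fin m → ℝ} (hy : ∀ i, 0 ≤ y i) (hpos : 0 < C (polyP ξ y)) {j : Fin m} (hj : y j = 0) :
    ∃ κ > 0, ∃ η > 0, ∀ s ∈ Ioo (0 : ℝ) 1,
      C (polyP ξ y) + κ * s ≤ C (polyP ξ fun i => if y i = 0 then η * s else y i) := by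
  obtain ⟨η, hη, hηy⟩ := exists_pos_forall_le_of_ne_zero hy
  set v := η • ξ j
  have hv (i : Fin m) : ⟪v, ξ i⟫ ≤ η := by
    calc ⟪v, ξ i⟫ ≤ ‖v‖ * ‖ξ i‖ := real_inner_le_norm _ _
      _ = η := by rw [norm_smul, hξ, hξ, Real.norm_of_nonneg hη.le, mul_one, mul_one]
  have hbdd (y : Fin m → ℝ) : Bornology.IsBounded (polyP ξ y) := (isCompact_polyP hhemi y).isBounded
  set P := -v +ᵥ polyP ξ y with hPdef
  have hP : IsCompact P := (isCompact_polyP hhemi y).vadd (-v)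
  have hne : P.Nonempty :=
    Nonempty.vadd_set ⟨0, mem_polyP.2 fun i => by simpa only [inner_zero_left] using hy i⟩
  have h0P : 0 ∉ P := by
    rw [hPdef, vadd_polyP, mem_polyP]
    intro h0
    have hjv := h0 j
    rw [inner_zero_left, inner_neg_left, real_inner_smul_left, real_inner_self_eq_norm_sq, hξ,
      hj] at hjv
    linarith
  obtain ⟨ε, hε, hlt⟩ := hC.exists_lt_Icc_smul hα hP ((convex_polyP ξ y).vadd (-v)) hne h0P
    (by rwa [hC.vadd_eq _ (hbdd y)])
  obtain ⟨κ, hκ, hgain⟩ := hC.exists_add_mul_le_Icc_smul hα.le hP hε.1 hlt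
  refine ⟨κ, hκ, η, hη, fun s hs => ?_⟩
  rw [← hC.vadd_eq (-v) (hbdd y), ← hC.vadd_eq (-v) (hbdd fun i => if y i = 0 then η * s else y i)]
  exact (hgain s hs).trans (hC.mono ((hbdd _).vadd _)
    (Icc_smul_neg_vadd_polyP_subset hv hη.le hηy hs.2.le))

end Polytopes

end IsHomogeneousSubmodular

/-! ### The capacity -/

theorem measure_rpow_le_eLpNorm {α : Type*} [MeasurableSpace α] {μ : Measure α} {s : Set α}
    (hs : MeasurableSet s) {q : ENNReal} (hq : q ≠ 0) (hq' : q ≠ ⊤) {u : α → ℝ}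
    (hu : ∀ x ∈ s, 1 ≤ u x) : μ s ^ (1 / q.toReal) ≤ eLpNorm u q μ := by
  calc μ s ^ (1 / q.toReal) = eLpNorm (s.indicator fun _ => (1 : ℝ)) q μ := by
        rw [eLpNorm_indicator_const hs hq hq', enorm_one, one_mul]
    _ ≤ eLpNorm u q μ := eLpNorm_mono fun x => by
        by_cases hx : x ∈ s
        · simpa [hx] using (hu x hx).trans (le_abs_self _)
        · simp [hx]

section DirichletEnergy

variable {V : Type*} [NormedAddCommGroup V] [InnerProductSpace ℝ V] [FiniteDimensional ℝ V]
  [MeasurableSpace V] [BorelSpace V] {𝔭 : ℝ}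

/-- The `𝔭`-Dirichlet energy `∫ |∇u|^𝔭`, the quantity minimised by the `𝔭`-capacity. -/
noncomputable def dirichletEnergy (𝔭 : ℝ) (u : V → ℝ) : ℝ :=
  ∫ x, ‖fderiv ℝ u x‖ ^ 𝔭

theorem dirichletEnergy_nonneg (𝔭 : ℝ) (u : V → ℝ) : 0 ≤ dirichletEnergy 𝔭 u :=
  integral_nonneg fun _ => by positivity

theorem dirichletEnergy_const_smul (𝔭 : ℝ) {r : ℝ} (hr : 0 ≤ r) (u : V → ℝ) :
    dirichletEnergy 𝔭 (r • u) = r ^ 𝔭 * dirichletEnergy 𝔭 u := by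
  simp only [dirichletEnergy, fderiv_const_smul_field, Pi.smul_apply, norm_smul,
    Real.norm_of_nonneg hr, Real.mul_rpow hr (norm_nonneg _), integral_const_mul]

theorem dirichletEnergy_comp_vadd (𝔭 : ℝ) (a : V) (u : V → ℝ) :
    dirichletEnergy 𝔭 (fun x => u (a +ᵥ x)) = dirichletEnergy 𝔭 u := by
  simp only [dirichletEnergy, vadd_eq_add, fderiv_comp_add_left]
  exact integral_add_left_eq_self (fun x => ‖fderiv ℝ u x‖ ^ 𝔭) a

theorem dirichletEnergy_comp_linearIsometryEquiv (𝔭 : ℝ) (L : V ≃ₗᵢ[ℝ] V) (u : V → ℝ) :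
    dirichletEnergy 𝔭 (fun x => u (L x)) = dirichletEnergy 𝔭 u := by
  have hnorm (x : V) : ‖fderiv ℝ (fun x => u (L x)) x‖ = ‖fderiv ℝ u (L x)‖ :=
    (congrArg norm (L.toContinuousLinearEquiv.comp_right_fderiv (f := u))).trans
      (ContinuousLinearMap.opNorm_comp_linearIsometryEquiv _ L)
  simp only [dirichletEnergy, hnorm]
  exact L.measurePreserving.integral_comp L.toHomeomorph.measurableEmbedding
    fun x => ‖fderiv ℝ u x‖ ^ 𝔭

theorem dirichletEnergy_comp_smul (𝔭 : ℝ) {r : ℝ} (hr : 0 < r) (u : V → ℝ) :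
    dirichletEnergy 𝔭 (fun x => u (r • x)) =
      r ^ (𝔭 - Module.finrank ℝ V) * dirichletEnergy 𝔭 u := by
  simp only [dirichletEnergy, fderiv_comp_smul, norm_smul, Real.norm_of_nonneg hr.le,
    Real.mul_rpow hr.le (norm_nonneg _), integral_const_mul]
  rw [Measure.integral_comp_smul volume (fun x => ‖fderiv ℝ u x‖ ^ 𝔭), smul_eq_mul, ← mul_assoc,
    abs_of_pos (by positivity), Real.rpow_sub hr, Real.rpow_natCast, div_eq_mul_inv]

theorem integrable_norm_fderiv_rpow (h𝔭 : 0 < 𝔭) {u : V → ℝ} (hu : ContDiff ℝ 1 u)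
    (hcs : HasCompactSupport u) : Integrable fun x => ‖fderiv ℝ u x‖ ^ 𝔭 := by
  refine Continuous.integrable_of_hasCompactSupport ?_ ?_
  · exact (hu.continuous_fderiv one_ne_zero).norm.rpow_const fun _ => Or.inr h𝔭.le
  · exact (hcs.fderiv ℝ).comp_left (g := fun L => ‖L‖ ^ 𝔭)
      (by rw [norm_zero, Real.zero_rpow h𝔭.ne'])

theorem eLpNorm_fderiv_eq_dirichletEnergy (h𝔭 : 0 < 𝔭) {u : V → ℝ} (hu : ContDiff ℝ 1 u)
    (hcs : HasCompactSupport u) :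
    eLpNorm (fderiv ℝ u) (ENNReal.ofReal 𝔭) volume =
      ENNReal.ofReal (dirichletEnergy 𝔭 u ^ 𝔭⁻¹) := by
  have hmem : MemLp (fderiv ℝ u) (ENNReal.ofReal 𝔭) volume :=
    (hu.continuous_fderiv one_ne_zero).memLp_of_hasCompactSupport (hcs.fderiv ℝ)
  rw [hmem.eLpNorm_eq_integral_rpow_norm (ENNReal.ofReal_pos.2 h𝔭).ne' ENNReal.ofReal_ne_top,
    ENNReal.toReal_ofReal h𝔭.le, dirichletEnergy]

theorem exists_eLpNorm_le_mul_dirichletEnergy_rpow (h𝔭 : 1 ≤ 𝔭) (hdim : 𝔭 < Module.finrank ℝ V) :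
    ∃ (q : ENNReal) (K : NNReal), q ≠ 0 ∧ q ≠ ⊤ ∧
      ∀ u : V → ℝ, ContDiff ℝ 1 u → HasCompactSupport u →
        eLpNorm u q volume ≤ K * ENNReal.ofReal (dirichletEnergy 𝔭 u ^ 𝔭⁻¹) := by
  have h𝔭0 : 0 < 𝔭 := zero_lt_one.trans_le h𝔭
  have hdim0 : 0 < Module.finrank ℝ V := by exact_mod_cast h𝔭0.trans hdim
  have hconj : 0 < 𝔭⁻¹ - (Module.finrank ℝ V : ℝ)⁻¹ := sub_pos.2 (inv_strictAnti₀ h𝔭0 hdim)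
  let q : NNReal := ⟨(𝔭⁻¹ - (Module.finrank ℝ V : ℝ)⁻¹)⁻¹, (inv_pos.2 hconj).le⟩
  have hq : 0 < q := inv_pos.2 hconj
  refine ⟨q, SNormLESNormFDerivOfEqConst ℝ (volume : Measure V) 𝔭.toNNReal,
    by exact_mod_cast hq.ne', ENNReal.coe_ne_top, fun u hu hcs => ?_⟩
  rw [← eLpNorm_fderiv_eq_dirichletEnergy h𝔭0 hu hcs]
  refine eLpNorm_le_eLpNorm_fderiv_of_eq volume hu hcs (p := 𝔭.toNNReal) (p' := q) ?_ hdim0 ?_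
  · rwa [Real.one_le_toNNReal]
  · rw [NNReal.coe_inv, Real.coe_toNNReal _ h𝔭0.le]
    exact inv_inv _

end DirichletEnergy

section SmoothMax

/-- A smooth approximation from below of `max a b = (a + b + |a - b|) / 2`, obtained by replacing
`|t|` by `√(t² + ε²) - ε`. It lets the lattice operations on test functions stay within smooth
functions; the corresponding minimum is `a + b - smoothMax ε a b`. -/
noncomputable def smoothMax (ε a b : ℝ) : ℝ :=
  (a + b + (√((a - b) ^ 2 + ε ^ 2) - ε)) / 2

theorem smoothMax_zero_zero {ε : ℝ} (hε : 0 ≤ ε) : smoothMax ε 0 0 = 0 := by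
  simp [smoothMax, Real.sqrt_sq hε]

theorem max_sub_le_smoothMax {ε : ℝ} (hε : 0 ≤ ε) (a b : ℝ) : max a b - ε ≤ smoothMax ε a b := by
  have habs : |a - b| ≤ √((a - b) ^ 2 + ε ^ 2) :=
    Real.abs_le_sqrt (le_add_of_nonneg_right (sq_nonneg ε))
  rw [sup_eq_half_smul_add_add_abs_sub' ℝ, abs_sub_comm, smul_eq_mul, smoothMax]
  linarith

theorem smoothMax_le_max {ε : ℝ} (hε : 0 ≤ ε) (a b : ℝ) : smoothMax ε a b ≤ max a b := by
  have hsqrt : √((a - b) ^ 2 + ε ^ 2) ≤ |a - b| + ε := by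
    rw [Real.sqrt_le_left (by positivity), ← sq_abs (a - b)]
    linarith [mul_nonneg (abs_nonneg (a - b)) hε]
  rw [sup_eq_half_smul_add_add_abs_sub' ℝ, abs_sub_comm, smul_eq_mul, smoothMax]
  linarith

variable {V : Type*} [NormedAddCommGroup V] [NormedSpace ℝ V] {ε : ℝ} {u v : V → ℝ}

theorem contDiff_smoothMax {k : WithTop ℕ∞} (hε : 0 < ε) (hu : ContDiff ℝ k u)
    (hv : ContDiff ℝ k v) : ContDiff ℝ k fun x => smoothMax ε (u x) (v x) := by
  have hsqrt : ContDiff ℝ k fun x => √((u x - v x) ^ 2 + ε ^ 2) :=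
    (((hu.sub hv).pow 2).add contDiff_const).sqrt fun _ => by positivity
  exact ((hu.add hv).add (hsqrt.sub contDiff_const)).div_const 2

theorem exists_hasFDerivAt_smoothMax (hε : 0 < ε) {x : V} {u' v' : V →L[ℝ] ℝ}
    (hu : HasFDerivAt u u' x) (hv : HasFDerivAt v v' x) :
    ∃ s ∈ Icc (0 : ℝ) 1,
      HasFDerivAt (fun x => smoothMax ε (u x) (v x)) (s • u' + (1 - s) • v') x := by
  set t := u x - v x
  set R := √(t ^ 2 + ε ^ 2)
  have hR : 0 < R := Real.sqrt_pos.2 (by positivity)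
  have hle : |t / R| ≤ 1 := by
    rw [abs_div, abs_of_pos hR, div_le_one hR]
    exact Real.abs_le_sqrt (le_add_of_nonneg_right (sq_nonneg ε))
  obtain ⟨hlower, hupper⟩ := abs_le.1 hle
  refine ⟨(1 + t / R) / 2, ⟨by linarith, by linarith⟩, ?_⟩
  have hroot : HasFDerivAt (fun x => √((u x - v x) ^ 2 + ε ^ 2)) ((t / R) • (u' - v')) x := by
    refine ((((hu.sub hv).pow 2).add_const (ε ^ 2)).sqrt (by positivity)).congr_fderiv ?_
    change (1 / (2 * R)) • (2 • t ^ (2 - 1)) • (u' - v') = (t / R) • (u' - v')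
    rw [smul_smul]
    congr 1
    simp only [Nat.add_one_sub_one, pow_one, nsmul_eq_mul, Nat.cast_ofNat]
    field_simp
  refine (((hu.add hv).add (hroot.sub_const ε)).mul_const 2⁻¹).congr_fderiv ?_
  module

end SmoothMax

theorem norm_convexCombo_rpow_le {V : Type*} [SeminormedAddCommGroup V] [NormedSpace ℝ V] {𝔭 : ℝ}
    (h𝔭 : 1 ≤ 𝔭) (a b : V) {s : ℝ} (hs : s ∈ Icc (0 : ℝ) 1) :
    ‖s • a + (1 - s) • b‖ ^ 𝔭 ≤ s * ‖a‖ ^ 𝔭 + (1 - s) * ‖b‖ ^ 𝔭 := by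
  have hs' : 0 ≤ 1 - s := sub_nonneg.2 hs.2
  calc ‖s • a + (1 - s) • b‖ ^ 𝔭 ≤ (s * ‖a‖ + (1 - s) * ‖b‖) ^ 𝔭 := by
        gcongr
        exact (convexOn_univ_norm (E := V)).2 trivial trivial hs.1 hs' (add_sub_cancel _ _)
    _ ≤ s * ‖a‖ ^ 𝔭 + (1 - s) * ‖b‖ ^ 𝔭 :=
        (convexOn_rpow h𝔭).2 (norm_nonneg a) (norm_nonneg b) hs.1 hs' (add_sub_cancel _ _)

theorem norm_fderiv_smoothMax_rpow_add_le {V : Type*} [NormedAddCommGroup V] [NormedSpace ℝ V]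
    {𝔭 ε : ℝ} (h𝔭 : 1 ≤ 𝔭) (hε : 0 < ε) {u v : V → ℝ} {x : V} (hu : DifferentiableAt ℝ u x)
    (hv : DifferentiableAt ℝ v x) :
    ‖fderiv ℝ (fun x => smoothMax ε (u x) (v x)) x‖ ^ 𝔭 +
      ‖fderiv ℝ (fun x => u x + v x - smoothMax ε (u x) (v x)) x‖ ^ 𝔭 ≤
        ‖fderiv ℝ u x‖ ^ 𝔭 + ‖fderiv ℝ v x‖ ^ 𝔭 := by
  obtain ⟨s, hs, hmax⟩ := exists_hasFDerivAt_smoothMax hε hu.hasFDerivAt hv.hasFDerivAt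
  have hmin : fderiv ℝ (fun x => u x + v x - smoothMax ε (u x) (v x)) x =
      s • fderiv ℝ v x + (1 - s) • fderiv ℝ u x := by
    refine ((hu.hasFDerivAt.add hv.hasFDerivAt).sub hmax).fderiv.trans ?_
    module
  rw [hmax.fderiv, hmin]
  linarith [norm_convexCombo_rpow_le h𝔭 (fderiv ℝ u x) (fderiv ℝ v x) hs,
    norm_convexCombo_rpow_le h𝔭 (fderiv ℝ v x) (fderiv ℝ u x) hs]

theorem dirichletEnergy_smoothMax_add_le {V : Type*} [NormedAddCommGroup V]
    [InnerProductSpace ℝ V] [FiniteDimensional ℝ V] [MeasurableSpace V] [BorelSpace V] {𝔭 ε : ℝ}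
    (h𝔭 : 1 ≤ 𝔭) (hε : 0 < ε) {u v : V → ℝ} (hu : ContDiff ℝ 1 u) (hv : ContDiff ℝ 1 v)
    (hucs : HasCompactSupport u) (hvcs : HasCompactSupport v) :
    dirichletEnergy 𝔭 (fun x => smoothMax ε (u x) (v x)) +
      dirichletEnergy 𝔭 (fun x => u x + v x - smoothMax ε (u x) (v x)) ≤
        dirichletEnergy 𝔭 u + dirichletEnergy 𝔭 v := by
  have hint {w : V → ℝ} := integrable_norm_fderiv_rpow (u := w) (zero_lt_one.trans_le h𝔭)
  have hmax := contDiff_smoothMax hε hu hv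
  have hmaxcs : HasCompactSupport fun x => smoothMax ε (u x) (v x) :=
    hucs.comp₂_left hvcs (smoothMax_zero_zero hε.le)
  have hmin := (hu.add hv).sub hmax
  have hmincs := (hucs.add hvcs).sub hmaxcs
  simp only [dirichletEnergy]
  rw [← integral_add (hint hmax hmaxcs) (hint hmin hmincs),
    ← integral_add (hint hu hucs) (hint hv hvcs)]
  exact integral_mono ((hint hmax hmaxcs).add (hint hmin hmincs))
    ((hint hu hucs).add (hint hv hvcs)) fun x =>
      norm_fderiv_smoothMax_rpow_add_le h𝔭 hε (hu.differentiable one_ne_zero x)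
        (hv.differentiable one_ne_zero x)

/-- `u` is one of the test functions competing in the infimum that defines the capacity of `E`. -/
structure IsCapacityTest {V : Type*} [NormedAddCommGroup V] [NormedSpace ℝ V] (E : Set V)
    (u : V → ℝ) : Prop where
  contDiff : ContDiff ℝ (⊤ : ℕ∞) u
  hasCompactSupport : HasCompactSupport u
  one_le : ∀ x ∈ E, 1 ≤ u x

namespace IsCapacityTest

variable {V : Type*} [NormedAddCommGroup V] [NormedSpace ℝ V] {E F : Set V} {u v : V → ℝ} {ε : ℝ}

theorem contDiff_one (hu : IsCapacityTest E u) : ContDiff ℝ 1 u :=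
  hu.contDiff.of_le (by exact_mod_cast le_top)

theorem mono (hu : IsCapacityTest F u) (hEF : E ⊆ F) : IsCapacityTest E u :=
  ⟨hu.contDiff, hu.hasCompactSupport, fun x hx => hu.one_le x (hEF hx)⟩

theorem comp_homeomorph {W : Type*} [NormedAddCommGroup W] [NormedSpace ℝ W]
    (hu : IsCapacityTest E u) {φ : W ≃ₜ V} (hφ : ContDiff ℝ (⊤ : ℕ∞) φ) :
    IsCapacityTest (φ ⁻¹' E) (u ∘ φ) :=
  ⟨hu.contDiff.comp hφ, hu.hasCompactSupport.comp_homeomorph φ, fun x hx => hu.one_le (φ x) hx⟩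

theorem union_smul_smoothMax (hu : IsCapacityTest E u) (hv : IsCapacityTest F v)
    (hε : ε ∈ Ioo (0 : ℝ) 1) :
    IsCapacityTest (E ∪ F) ((1 - ε)⁻¹ • fun x => smoothMax ε (u x) (v x)) where
  contDiff := contDiff_const.smul (contDiff_smoothMax hε.1 hu.contDiff hv.contDiff)
  hasCompactSupport :=
    (hu.hasCompactSupport.comp₂_left hv.hasCompactSupport (smoothMax_zero_zero hε.1.le)).smul_left
      (f := fun _ => (1 - ε)⁻¹)
  one_le x hx := by
    have hmax : 1 ≤ max (u x) (v x) :=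
      le_max_iff.2 (hx.imp (fun h => hu.one_le x h) fun h => hv.one_le x h)
    rw [Pi.smul_apply, smul_eq_mul, ← div_eq_inv_mul, one_le_div (sub_pos.2 hε.2)]
    linarith [max_sub_le_smoothMax hε.1.le (u x) (v x)]

theorem inter_sub_smoothMax (hu : IsCapacityTest E u) (hv : IsCapacityTest F v) (hε : 0 < ε) :
    IsCapacityTest (E ∩ F) fun x => u x + v x - smoothMax ε (u x) (v x) where
  contDiff := (hu.contDiff.add hv.contDiff).sub (contDiff_smoothMax hε hu.contDiff hv.contDiff)
  hasCompactSupport := (hu.hasCompactSupport.add hv.hasCompactSupport).sub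
    (hu.hasCompactSupport.comp₂_left hv.hasCompactSupport (smoothMax_zero_zero hε.le))
  one_le x hx := by
    linarith [smoothMax_le_max hε.le (u x) (v x), min_add_max (u x) (v x),
      le_min (hu.one_le x hx.1) (hv.one_le x hx.2)]

theorem exists_of_isBounded [FiniteDimensional ℝ V] [HasContDiffBump V]
    (hE : Bornology.IsBounded E) : ∃ u, IsCapacityTest E u := by
  obtain ⟨R, hR0, hR⟩ := hE.subset_closedBall_lt 0 0
  let f : ContDiffBump (0 : V) := ⟨R, R + 1, hR0, lt_add_one R⟩
  exact ⟨f, f.contDiff, f.hasCompactSupport, fun x hx => (f.one_of_mem_closedBall (hR hx)).ge⟩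

end IsCapacityTest

section Capacity

variable {n : ℕ} {𝔭 : ℝ} {E F : Set (EuclideanSpace ℝ (Fin n))}

theorem pCap_le_dirichletEnergy {u : EuclideanSpace ℝ (Fin n) → ℝ} (hu : IsCapacityTest E u) :
    pCap n 𝔭 E ≤ dirichletEnergy 𝔭 u := by
  refine csInf_le ⟨0, ?_⟩ ⟨u, hu.contDiff, hu.hasCompactSupport, hu.one_le, rfl⟩
  rintro _ ⟨u, -, -, -, rfl⟩
  exact dirichletEnergy_nonneg 𝔭 u

theorem le_pCap (hE : Bornology.IsBounded E) {a : ℝ}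
    (h : ∀ u, IsCapacityTest E u → a ≤ dirichletEnergy 𝔭 u) : a ≤ pCap n 𝔭 E := by
  obtain ⟨u, hu⟩ := IsCapacityTest.exists_of_isBounded hE
  refine le_csInf ⟨_, u, hu.contDiff, hu.hasCompactSupport, hu.one_le, rfl⟩ ?_
  rintro _ ⟨u, hsmooth, hcs, hone, rfl⟩
  exact h u ⟨hsmooth, hcs, hone⟩

theorem pCap_mono (hF : Bornology.IsBounded F) (hEF : E ⊆ F) : pCap n 𝔭 E ≤ pCap n 𝔭 F :=
  le_pCap hF fun _ hu => pCap_le_dirichletEnergy (hu.mono hEF)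

theorem pCap_eq_mul_pCap_image (φ : EuclideanSpace ℝ (Fin n) ≃ₜ EuclideanSpace ℝ (Fin n))
    (hφ : ContDiff ℝ (⊤ : ℕ∞) φ) (hφ' : ContDiff ℝ (⊤ : ℕ∞) φ.symm) {k : ℝ} (hk : 0 < k)
    (henergy : ∀ u, dirichletEnergy 𝔭 (u ∘ φ) = k * dirichletEnergy 𝔭 u)
    (hE : Bornology.IsBounded E) : pCap n 𝔭 E = k * pCap n 𝔭 (φ '' E) := by
  have hφE : Bornology.IsBounded (φ '' E) :=
    (hE.isCompact_closure.image φ.continuous).isBounded.subset (image_mono subset_closure)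
  refine le_antisymm ((div_le_iff₀' hk).1 (le_pCap hφE fun u hu => ?_))
    (le_pCap hE fun u hu => ?_)
  · rw [div_le_iff₀' hk, ← henergy]
    refine pCap_le_dirichletEnergy ?_
    simpa only [φ.preimage_image] using hu.comp_homeomorph hφ
  · have hu' : u = (u ∘ φ.symm) ∘ φ := by
      rw [Function.comp_assoc, φ.symm_comp_self, Function.comp_id]
    rw [hu', henergy]
    gcongr
    refine pCap_le_dirichletEnergy ?_
    simpa only [φ.preimage_symm] using hu.comp_homeomorph hφ'

theorem pCap_vadd (a : EuclideanSpace ℝ (Fin n)) (hE : Bornology.IsBounded E) :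
    pCap n 𝔭 (a +ᵥ E) = pCap n 𝔭 E := by
  have h := pCap_eq_mul_pCap_image (Homeomorph.vadd a) (contDiff_const.add contDiff_id)
    (contDiff_const.add contDiff_id) one_pos
    (fun u => (dirichletEnergy_comp_vadd 𝔭 a u).trans (one_mul _).symm) hE
  rw [h, one_mul]
  rfl

theorem pCap_image_linearIsometryEquiv
    (L : EuclideanSpace ℝ (Fin n) ≃ₗᵢ[ℝ] EuclideanSpace ℝ (Fin n)) (hE : Bornology.IsBounded E) :
    pCap n 𝔭 (L '' E) = pCap n 𝔭 E := by
  have h := pCap_eq_mul_pCap_image L.toHomeomorph L.contDiff L.symm.contDiff one_pos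
    (fun u => (dirichletEnergy_comp_linearIsometryEquiv 𝔭 L u).trans (one_mul _).symm) hE
  rw [h, one_mul]
  rfl

theorem pCap_smul {r : ℝ} (hr : 0 < r) (hE : Bornology.IsBounded E) :
    pCap n 𝔭 (r • E) = r ^ (n - 𝔭) * pCap n 𝔭 E := by
  have henergy (u : EuclideanSpace ℝ (Fin n) → ℝ) :
      dirichletEnergy 𝔭 (fun x => u (r • x)) = r ^ (𝔭 - n) * dirichletEnergy 𝔭 u := by
    simpa only [finrank_euclideanSpace_fin] using dirichletEnergy_comp_smul 𝔭 hr u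
  have h := pCap_eq_mul_pCap_image (Homeomorph.smulOfNeZero r hr.ne') (contDiff_const_smul r)
    (contDiff_const_smul r⁻¹) (Real.rpow_pos_of_pos hr (𝔭 - n))
    henergy hE
  rw [h, ← mul_assoc, ← Real.rpow_add hr, sub_add_sub_cancel, sub_self, Real.rpow_zero, one_mul]
  rfl

theorem mul_pCap_union_add_pCap_inter_le {ε : ℝ} (h𝔭 : 1 ≤ 𝔭) (hε : ε ∈ Ioo (0 : ℝ) 1)
    {u v : EuclideanSpace ℝ (Fin n) → ℝ} (hu : IsCapacityTest E u) (hv : IsCapacityTest F v) :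
    (1 - ε) ^ 𝔭 * pCap n 𝔭 (E ∪ F) + pCap n 𝔭 (E ∩ F) ≤
      dirichletEnergy 𝔭 u + dirichletEnergy 𝔭 v := by
  have hε' : 0 < 1 - ε := sub_pos.2 hε.2
  have hunion : (1 - ε) ^ 𝔭 * pCap n 𝔭 (E ∪ F) ≤
      dirichletEnergy 𝔭 fun x => smoothMax ε (u x) (v x) := by
    rw [← le_div_iff₀' (Real.rpow_pos_of_pos hε' 𝔭), div_eq_inv_mul, ← Real.inv_rpow hε'.le,
      ← dirichletEnergy_const_smul 𝔭 (inv_nonneg.2 hε'.le)]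
    exact pCap_le_dirichletEnergy (hu.union_smul_smoothMax hv hε)
  exact (add_le_add hunion (pCap_le_dirichletEnergy (hu.inter_sub_smoothMax hv hε.1))).trans
    (dirichletEnergy_smoothMax_add_le h𝔭 hε.1 hu.contDiff_one hv.contDiff_one
      hu.hasCompactSupport hv.hasCompactSupport)

theorem pCap_union_add_pCap_inter_le (h𝔭 : 1 ≤ 𝔭) (hE : Bornology.IsBounded E)
    (hF : Bornology.IsBounded F) :
    pCap n 𝔭 (E ∪ F) + pCap n 𝔭 (E ∩ F) ≤ pCap n 𝔭 E + pCap n 𝔭 F := by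
  have htests {u v : EuclideanSpace ℝ (Fin n) → ℝ} (hu : IsCapacityTest E u)
      (hv : IsCapacityTest F v) :
      pCap n 𝔭 (E ∪ F) + pCap n 𝔭 (E ∩ F) ≤ dirichletEnergy 𝔭 u + dirichletEnergy 𝔭 v := by
    have hcont : Continuous fun ε : ℝ =>
        (1 - ε) ^ 𝔭 * pCap n 𝔭 (E ∪ F) + pCap n 𝔭 (E ∩ F) := by
      have hpow : Continuous fun ε : ℝ => (1 - ε) ^ 𝔭 :=
        (continuous_const.sub continuous_id).rpow_const fun _ => Or.inr (by linarith)
      fun_prop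
    have hlim := (hcont.tendsto 0).mono_left (nhdsWithin_le_nhds (s := Ioi 0))
    rw [sub_zero, Real.one_rpow, one_mul] at hlim
    exact le_of_tendsto hlim (mem_of_superset (Ioo_mem_nhdsGT one_pos) fun ε hε =>
      mul_pCap_union_add_pCap_inter_le h𝔭 hε hu hv)
  rw [← sub_le_iff_le_add]
  refine le_pCap hE fun u hu => ?_
  rw [sub_le_comm]
  exact le_pCap hF fun v hv => sub_le_iff_le_add'.2 (htests hu hv)

theorem isHomogeneousSubmodular_pCap (h𝔭 : 1 ≤ 𝔭) :
    IsHomogeneousSubmodular (pCap n 𝔭) (n - 𝔭) where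
  mono := pCap_mono
  union_add_inter_le := pCap_union_add_pCap_inter_le h𝔭
  vadd_eq a _ := pCap_vadd a
  image_eq L _ := pCap_image_linearIsometryEquiv L
  smul_eq hr _ := pCap_smul hr

theorem pCap_pos (h𝔭 : 1 ≤ 𝔭) (h𝔭n : 𝔭 < n) (hE : Bornology.IsBounded E)
    (hmeas : MeasurableSet E) (hvol : volume E ≠ 0) : 0 < pCap n 𝔭 E := by
  obtain ⟨q, K, hq, hq', hK⟩ := exists_eLpNorm_le_mul_dirichletEnergy_rpow
    (V := EuclideanSpace ℝ (Fin n)) h𝔭 (by rwa [finrank_euclideanSpace_fin])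
  have h𝔭0 : 0 < 𝔭 := zero_lt_one.trans_le h𝔭
  set a := (volume E ^ (1 / q.toReal)).toReal
  have hfin : volume E ^ (1 / q.toReal) ≠ ⊤ :=
    ENNReal.rpow_ne_top_of_nonneg (by positivity) hE.measure_lt_top.ne
  have ha : 0 < a := ENNReal.toReal_pos
    (ENNReal.rpow_pos (pos_iff_ne_zero.2 hvol) hE.measure_lt_top.ne).ne' hfin
  have hpos : 0 < (a / (K + 1)) ^ 𝔭 := by positivity
  refine hpos.trans_le (le_pCap hE fun u hu => ?_)
  have henergy := dirichletEnergy_nonneg 𝔭 u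
  have hsobolev := (measure_rpow_le_eLpNorm hmeas hq hq' hu.one_le).trans
    (hK u hu.contDiff_one hu.hasCompactSupport)
  rw [← Real.le_rpow_inv_iff_of_pos (by positivity) henergy h𝔭0, div_le_iff₀ (by positivity)]
  calc a ≤ K * dirichletEnergy 𝔭 u ^ 𝔭⁻¹ := by
        refine ENNReal.toReal_le_of_le_ofReal (by positivity) ?_
        rwa [ENNReal.ofReal_mul K.coe_nonneg, ENNReal.ofReal_coe_nnreal]
    _ ≤ dirichletEnergy 𝔭 u ^ 𝔭⁻¹ * (K + 1) := by
        rw [mul_comm]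
        gcongr
        exact le_add_of_nonneg_right zero_le_one

end Capacity

theorem stmt8_general {n m : ℕ} {C : Set (EuclideanSpace ℝ (Fin n)) → ℝ} {α p : ℝ}
    (hC : IsHomogeneousSubmodular C α) (hα : 0 < α) (hball : 0 < C (closedBall 0 1)) (hp : 1 < p)
    {ξ : Fin m → EuclideanSpace ℝ (Fin n)} (hξ : ∀ i, ‖ξ i‖ = 1)
    (hhemi : ¬ ∃ v : EuclideanSpace ℝ (Fin n), ‖v‖ = 1 ∧ ∀ i, ⟪ξ i, v⟫ ≤ 0)
    {w : Fin m → ℝ} (hw : ∀ i, 0 < w i) {yt : Fin m → ℝ} (hyt : ∀ i, 0 ≤ yt i)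
    (hconstr : ∑ i, w i * yt i ^ p = 1)
    (hmax : ∀ y : Fin m → ℝ, (∀ i, 0 ≤ y i) → ∑ i, w i * y i ^ p = 1 →
      C (polyP ξ y) ≤ C (polyP ξ yt)) :
    (0 : EuclideanSpace ℝ (Fin n)) ∈ interior (polyP ξ yt) := by
  refine zero_mem_interior_polyP fun j => (hyt j).lt_of_ne' fun hj => ?_
  have hp0 : 0 < p := one_pos.trans hp
  have hscale {y : Fin m → ℝ} (hy : ∀ i, 0 ≤ y i) (hsum : 0 < ∑ i, w i * y i ^ p) :=
    hC.polyP_le_rpow_mul hp0 hhemi hmax hy hsum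
  have hpos : 0 < C (polyP ξ yt) := by
    have hsum : 0 < ∑ i, w i * (1 : ℝ) ^ p :=
      Finset.sum_pos (fun i _ => mul_pos (hw i) (by positivity)) ⟨j, Finset.mem_univ j⟩
    have hone : 0 < C (polyP ξ fun _ => 1) :=
      hball.trans_le (hC.mono (isCompact_polyP hhemi _).isBounded
        (closedBall_subset_polyP hξ fun _ => le_rfl))
    exact pos_of_mul_pos_right (hone.trans_le (hscale (fun _ => zero_le_one) hsum)) (by positivity)
  obtain ⟨κ, hκ, η, hη, hgain⟩ := hC.exists_polyP_add_mul_le hα hξ hhemi hyt hpos hj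
  set D := (∑ i, if yt i = 0 then w i else 0) * η ^ p
  obtain ⟨s, hs, hlt⟩ := exists_one_add_mul_rpow_rpow_mul_lt hp hκ (C (polyP ξ yt)) D (α / p)
  have hsum : ∑ i, w i * (if yt i = 0 then η * s else yt i) ^ p = 1 + D * s ^ p := by
    rw [← hconstr, mul_assoc, ← Real.mul_rpow hη.le hs.1.le, Finset.sum_mul,
      ← Finset.sum_add_distrib]
    refine Finset.sum_congr rfl fun i _ => ?_
    split_ifs with hi <;> simp [hi, hp0.ne']
  have hD : 0 ≤ D := mul_nonneg
    (Finset.sum_nonneg fun i _ => by split_ifs; exacts [(hw i).le, le_rfl]) (by positivity)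
  have hle := hscale (y := fun i => if yt i = 0 then η * s else yt i)
    (fun i => by split_ifs; exacts [(mul_pos hη hs.1).le, hyt i])
    (by rw [hsum]; have := hs.1; positivity)
  rw [hsum] at hle
  exact (((hgain s hs).trans hle).trans_lt hlt).false

theorem stmt8 (n m : ℕ) (hn : 2 ≤ n) (p 𝔭 : ℝ) (hp : 1 < p) (h𝔭1 : 1 < 𝔭) (h𝔭n : 𝔭 < (n : ℝ))
    (ξ : Fin m → EuclideanSpace ℝ (Fin n)) (hξ : ∀ i, ‖ξ i‖ = 1)
    (hdist : Function.Injective ξ)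
    (hhemi : ¬ ∃ v : EuclideanSpace ℝ (Fin n), ‖v‖ = 1 ∧ ∀ i, ⟪ξ i, v⟫ ≤ 0)
    (c : Fin m → ℝ) (hc : ∀ i, 0 < c i)
    (yt : Fin m → ℝ) (hyt : ∀ i, 0 ≤ yt i)
    (hconstr : (𝔭 - 1) / ((n : ℝ) - 𝔭) * ∑ i, c i * yt i ^ p = 1)
    (hmax : ∀ y : Fin m → ℝ, (∀ i, 0 ≤ y i) →
      (𝔭 - 1) / ((n : ℝ) - 𝔭) * ∑ i, c i * y i ^ p = 1 →
      pCap n 𝔭 (polyP ξ y) ≤ pCap n 𝔭 (polyP ξ yt)) :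
    (0 : EuclideanSpace ℝ (Fin n)) ∈ interior (polyP ξ yt) := by
  have hfactor : 0 < (𝔭 - 1) / ((n : ℝ) - 𝔭) := div_pos (sub_pos.2 h𝔭1) (sub_pos.2 h𝔭n)
  simp only [Finset.mul_sum, ← mul_assoc] at hconstr hmax
  exact stmt8_general (isHomogeneousSubmodular_pCap h𝔭1.le) (sub_pos.2 h𝔭n)
    (pCap_pos h𝔭1.le h𝔭n isBounded_closedBall measurableSet_closedBall
      (measure_closedBall_pos _ _ one_pos).ne')
    hp hξ hhemi (fun i => mul_pos hfactor (hc i)) hyt hconstr hmax
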